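/- Let m, n > 1 be integers and let X = S^m(1) × ℝ^n ⊆ ℝ^{m+n+1}, realizing (S^m × ℝ^n, g₀^m + g_E). The isoperimetric profile I_X (taken in dimension m+n) is a non-decreasing function on (0, ∞). -/

import Mathlib

/-!
For `0 < t ≤ 1` the map `φ_t (x, y) = (x, t y)` is a homeomorphism of `S^m(1) × ℝ^n` onto itself
and is `1`-Lipschitz. Hence it carries closed regions to closed regions and boundaries to
boundaries, without increasing the `(d-1)`-dimensional Hausdorff measure of the boundary. So it
suffices that a region `Ω` of volume `w` can be brought to any prescribed volume `v ∈ (0, w]` by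
some `φ_t`.

This follows from the intermediate value theorem rather than from the exact scaling law
`H^d(φ_t Ω) = t^n H^d(Ω)`. Since `φ_t = φ_{t/s} ∘ φ_s`, the function `f t = H^d(φ_t Ω)` satisfies
`f s ≤ f t ≤ (t/s)^d f s` for `s ≤ t` (`hausdorff_dg_wt_le`), so it is continuous. It tends to `0`
with `t` (`hausdorff_dg_wt_decay`): the space is covered by finitely many patches on which
forgetting one coordinate of the sphere is bi-Lipschitz onto a subset of `ℝ^d`. Forgetting that
coordinate turns `φ_t` into a diagonal linear map of determinant `t^n`, and `H^d` on `ℝ^d` is a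
Haar measure. Only Lipschitz estimates and images of sets are used, so no measurability is needed.
-/

open MeasureTheory ENNReal

noncomputable section

/-- The topological boundary of `Ω` inside the subspace `X` (for `Ω ⊆ X`):
the frontier of `Ω` in the subspace topology of `X`, viewed as a subset of the
ambient space. -/
def boundaryIn {E : Type*} [TopologicalSpace E] (X Ω : Set E) : Set E :=
  X ∩ closure Ω ∩ closure (X \ Ω)

/-- `Ω` is a closed subset of the subspace `X`. -/
def IsClosedIn {E : Type*} [TopologicalSpace E] (X Ω : Set E) : Prop :=
  Ω ⊆ X ∧ X ∩ closure Ω ⊆ Ω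

/-- The isoperimetric profile in dimension `d` of a subset `X` of Euclidean space:
the infimum of the `(d-1)`-dimensional Hausdorff measures of the boundaries (in `X`)
of closed regions `Ω ⊆ X` of `d`-dimensional Hausdorff measure `v`. -/
def isoProfile {N : ℕ} (X : Set (EuclideanSpace ℝ (Fin N))) (d : ℕ) (v : ℝ) : ℝ≥0∞ :=
  sInf { A : ℝ≥0∞ | ∃ Ω : Set (EuclideanSpace ℝ (Fin N)),
    IsClosedIn X Ω ∧ μH[(d : ℝ)] Ω = ENNReal.ofReal v ∧
      μH[(d : ℝ) - 1] (boundaryIn X Ω) = A }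

/-- `S^m(r) × ℝ^n` realized inside `ℝ^{m+n+1}`: the points whose first `m+1`
coordinates form a vector of norm `r`. -/
def sphereProd (m n : ℕ) (r : ℝ) : Set (EuclideanSpace ℝ (Fin (m + n + 1))) :=
  {x | Real.sqrt (∑ i : Fin (m + 1), x ⟨i.1, Nat.lt_of_lt_of_le i.2 (by omega)⟩ ^ 2) = r}

/-- The sphere `S^k(r)` of radius `r` centered at the origin of `ℝ^{k+1}`. -/
def euclSphere (k : ℕ) (r : ℝ) : Set (EuclideanSpace ℝ (Fin (k + 1))) :=
  Metric.sphere 0 r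

/-- The Euclidean isoperimetric constant
`γ_k = H^{k-1}(S^{k-1}(1)) / H^k(B^k(1))^{(k-1)/k}`. -/
def eucGamma (k : ℕ) : ℝ :=
  (μH[(k : ℝ) - 1] (Metric.sphere (0 : EuclideanSpace ℝ (Fin k)) 1)).toReal /
    (μH[(k : ℝ)] (Metric.closedBall (0 : EuclideanSpace ℝ (Fin k)) 1)).toReal ^
      (((k : ℝ) - 1) / k)

/-! ### Diagonal maps and Hausdorff measure -/

/-- The diagonal linear map `x ↦ (a j * x j)_j` of Euclidean space. -/
def dg {N : ℕ} (a : Fin N → ℝ) : EuclideanSpace ℝ (Fin N) →ₗ[ℝ] EuclideanSpace ℝ (Fin N) :=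
  Matrix.toLpLin 2 2 (Matrix.diagonal a)

lemma dg_apply {N : ℕ} (a : Fin N → ℝ) (x : EuclideanSpace ℝ (Fin N)) (j : Fin N) :
    dg a x j = a j * x j := by
  simp [dg, Matrix.mulVec_diagonal]

lemma dg_dg {N : ℕ} (a b : Fin N → ℝ) (x : EuclideanSpace ℝ (Fin N)) :
    dg a (dg b x) = dg (fun j => a j * b j) x := by
  ext j; simp [dg_apply, mul_assoc]

lemma lipschitzWith_dg {N : ℕ} (a : Fin N → ℝ) (K : NNReal) (h : ∀ j, |a j| ≤ K) :
    LipschitzWith K (dg a) := by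
  refine LipschitzWith.of_dist_le_mul fun x y => ?_
  rw [dist_eq_norm, dist_eq_norm, ← map_sub]
  refine abs_le_of_sq_le_sq' ?_ (by positivity) |>.2
  rw [mul_pow, EuclideanSpace.real_norm_sq_eq, EuclideanSpace.real_norm_sq_eq, Finset.mul_sum]
  refine Finset.sum_le_sum fun j _ => ?_
  rw [dg_apply, mul_pow]
  have hj : a j ^ 2 ≤ (K : ℝ) ^ 2 := sq_le_sq.2 (by simpa using h j)
  gcongr

lemma det_dg {N : ℕ} (a : Fin N → ℝ) : LinearMap.det (dg a) = ∏ j, a j := by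
  rw [dg, LinearMap.det_toLpLin, Matrix.det_diagonal]

/-- On `ℝ^N` the measure `H^N` is a Haar measure, so a diagonal map scales it by `|det|`. -/
lemma hausdorff_image_dg {N : ℕ} (a : Fin N → ℝ) (s : Set (EuclideanSpace ℝ (Fin N))) :
    μH[(N : ℝ)] (dg a '' s) = ENNReal.ofReal |∏ j, a j| * μH[(N : ℝ)] s := by
  have : (Measure.hausdorffMeasure (N : ℝ) : Measure (EuclideanSpace ℝ (Fin N))).IsAddHaarMeasure := by
    have h := MeasureTheory.isAddHaarMeasure_hausdorffMeasure (E := EuclideanSpace ℝ (Fin N))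
    rwa [finrank_euclideanSpace_fin] at h
  rw [Measure.addHaar_image_linearMap, det_dg]

lemma hausdorff_le_image_of_antilipschitzOn {A B : Type*} [MetricSpace A] [MetricSpace B]
    [MeasurableSpace A] [BorelSpace A] [MeasurableSpace B] [BorelSpace B]
    (f : A → B) (K : NNReal) (S : Set A) (h : ∀ x ∈ S, ∀ y ∈ S, dist x y ≤ K * dist (f x) (f y))
    {d : ℝ} (hd : 0 ≤ d) : μH[d] S ≤ (K : ℝ≥0∞) ^ d * μH[d] (f '' S) := by
  rcases S.eq_empty_or_nonempty with rfl | hne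
  · simp
  have : Nonempty A := ⟨hne.some⟩
  have hinj : Set.InjOn f S := fun x hx y hy hxy => by
    have := h x hx y hy
    rw [hxy, dist_self, mul_zero] at this
    exact dist_le_zero.1 this
  have hinv := hinj.leftInvOn_invFunOn
  have hL : LipschitzOnWith K (Function.invFunOn f S) (f '' S) := by
    refine LipschitzOnWith.of_dist_le_mul ?_
    rintro _ ⟨x, hx, rfl⟩ _ ⟨y, hy, rfl⟩
    rw [hinv hx, hinv hy]
    exact h x hx y hy
  have := hL.hausdorffMeasure_image_le hd
  rwa [hinv.image_image] at this

/-! ### Contraction of the Euclidean factor -/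

/-- The weights of the map `(x, y) ↦ (x, t y)` of `ℝ^{m+1} × ℝ^n`. -/
def wt (m n : ℕ) (t : ℝ) : Fin (m + n + 1) → ℝ := fun j => if j.1 < m + 1 then 1 else t

lemma wt_mul (m n : ℕ) (s t : ℝ) : (fun j => wt m n s j * wt m n t j) = wt m n (s * t) := by
  ext j; by_cases h : j.1 < m + 1 <;> simp [wt, h]

lemma dg_wt_one (m n : ℕ) (x : EuclideanSpace ℝ (Fin (m + n + 1))) : dg (wt m n 1) x = x := by
  ext j; simp [dg_apply, wt]

/-- The homeomorphism `(x, y) ↦ (x, t y)` of `ℝ^{m+1} × ℝ^n`, for `t ≠ 0`. -/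
def wtHomeo (m n : ℕ) (t : ℝ) (ht : t ≠ 0) :
    EuclideanSpace ℝ (Fin (m + n + 1)) ≃ₜ EuclideanSpace ℝ (Fin (m + n + 1)) where
  toFun := dg (wt m n t)
  invFun := dg (wt m n t⁻¹)
  left_inv x := by rw [dg_dg, wt_mul, inv_mul_cancel₀ ht, dg_wt_one]
  right_inv x := by rw [dg_dg, wt_mul, mul_inv_cancel₀ ht, dg_wt_one]
  continuous_toFun := LinearMap.continuous_of_finiteDimensional _
  continuous_invFun := LinearMap.continuous_of_finiteDimensional _

lemma dg_wt_mem {m n : ℕ} (t : ℝ) (x : EuclideanSpace ℝ (Fin (m + n + 1))) :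
    dg (wt m n t) x ∈ sphereProd m n 1 ↔ x ∈ sphereProd m n 1 := by
  simp only [sphereProd, Set.mem_ofPred_eq, dg_apply]
  have : ∀ i : Fin (m + 1), wt m n t ⟨i.1, Nat.lt_of_lt_of_le i.2 (by omega)⟩ = 1 := fun i => by
    simp only [wt, if_pos i.2]
  simp only [this, one_mul]

lemma wtHomeo_image_sphereProd (m n : ℕ) (t : ℝ) (ht : t ≠ 0) :
    wtHomeo m n t ht '' sphereProd m n 1 = sphereProd m n 1 := by
  ext y
  constructor
  · rintro ⟨x, hx, rfl⟩
    exact (dg_wt_mem t x).2 hx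
  · intro hy
    exact ⟨(wtHomeo m n t ht).symm y, (dg_wt_mem t⁻¹ y).2 hy, (wtHomeo m n t ht).apply_symm_apply y⟩

lemma isClosedIn_image {E : Type*} [TopologicalSpace E] (φ : E ≃ₜ E) {X Ω : Set E}
    (hX : φ '' X = X) (h : IsClosedIn X Ω) : IsClosedIn X (φ '' Ω) := by
  refine ⟨hX ▸ Set.image_mono h.1, ?_⟩
  nth_rewrite 1 [← hX]
  rw [← φ.image_closure, ← Set.image_inter φ.injective]
  exact Set.image_mono h.2

lemma boundaryIn_image {E : Type*} [TopologicalSpace E] (φ : E ≃ₜ E) {X : Set E} (Ω : Set E)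
    (hX : φ '' X = X) : boundaryIn X (φ '' Ω) = φ '' boundaryIn X Ω := by
  rw [boundaryIn, boundaryIn, Set.image_inter φ.injective, Set.image_inter φ.injective,
    φ.image_closure, φ.image_closure, Set.image_sdiff φ.injective, hX]

lemma lipschitzWith_dg_wt (m n : ℕ) (t : ℝ) (K : NNReal) (h1 : 1 ≤ K) (ht : |t| ≤ K) :
    LipschitzWith K (dg (wt m n t)) := by
  refine lipschitzWith_dg _ _ fun j => ?_
  unfold wt
  split_ifs
  · simpa using h1
  · exact ht

/-- Enlarging the parameter of the contraction does not decrease Hausdorff measures, and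
multiplies them by at most the `d`-th power of the ratio of the parameters. -/
lemma hausdorff_dg_wt_le (m n : ℕ) {d : ℝ} (hd : 0 ≤ d) {s t : ℝ} (hs : 0 < s) (hst : s ≤ t)
    (Ω : Set (EuclideanSpace ℝ (Fin (m + n + 1)))) :
    μH[d] (dg (wt m n s) '' Ω) ≤ μH[d] (dg (wt m n t) '' Ω) ∧
    μH[d] (dg (wt m n t) '' Ω) ≤ ENNReal.ofReal ((t / s) ^ d) * μH[d] (dg (wt m n s) '' Ω) := by
  have ht := hs.trans_le hst
  have key : ∀ {p q : ℝ}, 0 < p → 0 < q → ∀ K : NNReal, 1 ≤ K → p / q ≤ K →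
      μH[d] (dg (wt m n p) '' Ω) ≤ (K : ℝ≥0∞) ^ d * μH[d] (dg (wt m n q) '' Ω) := by
    intro p q hp hq K h1 hK
    have h := (lipschitzWith_dg_wt m n (p / q) K h1
      (by rwa [abs_of_pos (div_pos hp hq)])).hausdorffMeasure_image_le hd (dg (wt m n q) '' Ω)
    rw [Set.image_image] at h
    simpa only [dg_dg, wt_mul, div_mul_cancel₀ p hq.ne'] using h
  constructor
  · simpa using key hs ht 1 le_rfl (by simpa using (div_le_one ht).2 hst)
  · have h := key ht hs (t / s).toNNReal
      (by rw [← NNReal.coe_le_coe, Real.coe_toNNReal _ (div_pos ht hs).le]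
          simpa using (one_le_div hs).2 hst) (Real.le_coe_toNNReal _)
    rwa [← ENNReal.ofReal_rpow_of_pos (div_pos ht hs)]

/-! ### Decay of the volume under contraction -/

/-- The part of `S^m(1) × ℝ^n` on which the `i`-th coordinate has sign `e = ±1` and modulus at
least `1 / (m + 1)`; it is a Lipschitz graph over the hyperplane `x i = 0`. -/
def patch (m n : ℕ) (i : Fin (m + 1)) (e : ℝ) : Set (EuclideanSpace ℝ (Fin (m + n + 1))) :=
  {x ∈ sphereProd m n 1 | 1 / (m + 1 : ℝ) ≤ e * x ⟨i.1, Nat.lt_of_lt_of_le i.2 (by omega)⟩}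

/-- The projection forgetting the `i`-th coordinate. -/
def proj {N : ℕ} (i : Fin (N + 1)) (x : EuclideanSpace ℝ (Fin (N + 1))) :
    EuclideanSpace ℝ (Fin N) := WithLp.toLp 2 fun j => x (i.succAbove j)

lemma dist_proj {N : ℕ} (i : Fin (N + 1)) (x y : EuclideanSpace ℝ (Fin (N + 1))) :
    dist x y ^ 2 = (x i - y i) ^ 2 + dist (proj i x) (proj i y) ^ 2 := by
  simp only [dist_eq_norm, EuclideanSpace.real_norm_sq_eq, proj]
  rw [Fin.sum_univ_succAbove _ i]
  simp

lemma lipschitzWith_proj {N : ℕ} (i : Fin (N + 1)) : LipschitzWith 1 (proj i) := by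
  refine LipschitzWith.of_dist_le_mul fun x y => ?_
  have := dist_proj i x y
  rw [NNReal.coe_one, one_mul]
  refine abs_le_of_sq_le_sq' ?_ dist_nonneg |>.2
  nlinarith [sq_nonneg (x i - y i)]

lemma sum_sq_of_mem {m n : ℕ} {x : EuclideanSpace ℝ (Fin (m + n + 1))}
    (hx : x ∈ sphereProd m n 1) :
    ∑ i : Fin (m + 1), x ⟨i.1, Nat.lt_of_lt_of_le i.2 (by omega)⟩ ^ 2 = 1 := by
  simpa using (Real.sqrt_eq_one.1 hx)

lemma abs_le_one_of_mem {m n : ℕ} {x : EuclideanSpace ℝ (Fin (m + n + 1))}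
    (hx : x ∈ sphereProd m n 1) (i : Fin (m + 1)) :
    |x ⟨i.1, Nat.lt_of_lt_of_le i.2 (by omega)⟩| ≤ 1 := by
  rw [← sq_le_one_iff_abs_le_one, ← sum_sq_of_mem hx]
  exact Finset.single_le_sum
    (f := fun i : Fin (m + 1) => x ⟨i.1, Nat.lt_of_lt_of_le i.2 (by omega)⟩ ^ 2)
    (fun _ _ => sq_nonneg _) (Finset.mem_univ i)

lemma sphereProd_subset_patches (m n : ℕ) :
    sphereProd m n 1 ⊆ ⋃ p : Fin (m + 1) × Bool, patch m n p.1 (if p.2 then 1 else -1) := by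
  intro x hx
  have h1 := sum_sq_of_mem hx
  have hm : (0 : ℝ) < m + 1 := by positivity
  obtain ⟨i, -, hi⟩ := Finset.exists_le_of_sum_le (s := (Finset.univ : Finset (Fin (m + 1))))
    (f := fun _ => 1 / (m + 1 : ℝ))
    (g := fun i : Fin (m + 1) => x ⟨i.1, Nat.lt_of_lt_of_le i.2 (by omega)⟩ ^ 2)
    Finset.univ_nonempty (by rw [h1]; simp [hm.ne'])
  have ha := abs_le_one_of_mem hx i
  have hi' : 1 / (m + 1 : ℝ) ≤ |x ⟨i.1, Nat.lt_of_lt_of_le i.2 (by omega)⟩| := by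
    rw [← sq_abs] at hi
    nlinarith [abs_nonneg (x ⟨i.1, Nat.lt_of_lt_of_le i.2 (by omega)⟩)]
  rw [Set.mem_iUnion]
  rcases le_abs.1 hi' with h | h
  · exact ⟨(i, true), hx, by simpa using h⟩
  · exact ⟨(i, false), hx, by simpa using h⟩

/-- The projection forgetting the `i`-th coordinate is bi-Lipschitz on a patch. -/
lemma patch_antilipschitz (m n : ℕ) (i : Fin (m + 1)) (e : ℝ) (he : |e| = 1)
    {x y : EuclideanSpace ℝ (Fin (m + n + 1))} (hx : x ∈ patch m n i e) (hy : y ∈ patch m n i e) :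
    dist x y ≤ ((m + 1) * (m + 1) + 1 : ℝ) *
      dist (proj ⟨i.1, Nat.lt_of_lt_of_le i.2 (by omega)⟩ x)
        (proj ⟨i.1, Nat.lt_of_lt_of_le i.2 (by omega)⟩ y) := by
  set k : Fin (m + n + 1) := ⟨i.1, Nat.lt_of_lt_of_le i.2 (by omega)⟩ with hk
  set D := dist (proj k x) (proj k y) with hD
  have hD0 : 0 ≤ D := dist_nonneg
  have hm : (0 : ℝ) < m + 1 := by positivity
  have hdp := dist_proj k x y
  rw [← hD] at hdp
  have hcoord : ∀ j, j ≠ k → |x j - y j| ≤ D := by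
    intro j hj
    obtain ⟨l, rfl⟩ := Fin.exists_succAbove_eq hj
    refine abs_le_of_sq_le_sq ?_ hD0
    rw [hD, dist_eq_norm, EuclideanSpace.real_norm_sq_eq]
    exact Finset.single_le_sum (f := fun l => ((proj k x - proj k y) l) ^ 2)
      (fun _ _ => sq_nonneg _) (Finset.mem_univ l)
  -- Subtracting the two sphere equations expresses `x k ^ 2 - y k ^ 2` by the other coordinates.
  have hsq : |x k ^ 2 - y k ^ 2| ≤ (m + 1) * (2 * D) := by
    have h1 := sum_sq_of_mem hx.1
    have h2 := sum_sq_of_mem hy.1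
    rw [← Finset.add_sum_erase _ _ (Finset.mem_univ i)] at h1 h2
    have h3 : x k ^ 2 - y k ^ 2 = ∑ j ∈ Finset.univ.erase i,
        (y ⟨j.1, Nat.lt_of_lt_of_le j.2 (by omega)⟩ ^ 2 -
          x ⟨j.1, Nat.lt_of_lt_of_le j.2 (by omega)⟩ ^ 2) := by
      rw [Finset.sum_sub_distrib]; linarith
    rw [h3]
    refine (Finset.abs_sum_le_sum_abs _ _).trans ((Finset.sum_le_card_nsmul _ _ (2 * D) ?_).trans ?_)
    · intro j hj
      have hji : j ≠ i := (Finset.mem_erase.1 hj).1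
      have hc := hcoord ⟨j.1, Nat.lt_of_lt_of_le j.2 (by omega)⟩
        (fun h => hji (Fin.ext (by simpa [hk] using h)))
      have hxa := abs_le_one_of_mem hx.1 j
      have hya := abs_le_one_of_mem hy.1 j
      rw [abs_sub_comm, sq_sub_sq, abs_mul]
      exact mul_le_mul ((abs_add_le _ _).trans (by linarith)) hc (abs_nonneg _) (by norm_num)
    · rw [nsmul_eq_mul]
      gcongr
      rw [Finset.card_erase_of_mem (Finset.mem_univ i)]
      simp
  have hsum : 2 / (m + 1 : ℝ) ≤ |x k + y k| := by
    have h1 := hx.2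
    have h2 := hy.2
    have : |x k + y k| = |e * (x k + y k)| := by rw [abs_mul, he, one_mul]
    rw [this]
    refine le_trans ?_ (le_abs_self _)
    have : 2 / (m + 1 : ℝ) = 1 / (m + 1) + 1 / (m + 1) := by ring
    rw [this, mul_add]
    exact add_le_add h1 h2
  have hdiff : |x k - y k| ≤ (m + 1) * (m + 1) * D := by
    rw [sq_sub_sq, abs_mul] at hsq
    have h := (mul_le_mul_of_nonneg_right hsum (abs_nonneg (x k - y k))).trans hsq
    rw [div_mul_eq_mul_div, div_le_iff₀ hm] at h
    nlinarith
  refine abs_le_of_sq_le_sq' ?_ (by positivity) |>.2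
  rw [hdp, ← sq_abs (x k - y k)]
  have := abs_nonneg (x k - y k)
  have hMD : 0 ≤ (m + 1) * (m + 1) * D := by positivity
  nlinarith [mul_le_mul hdiff hdiff this hMD]

lemma proj_dg {N : ℕ} (i : Fin (N + 1)) (a : Fin (N + 1) → ℝ)
    (x : EuclideanSpace ℝ (Fin (N + 1))) :
    proj i (dg a x) = dg (fun j => a (i.succAbove j)) (proj i x) := by
  ext j; simp [proj, dg_apply]

lemma prod_wt_le {m n : ℕ} (hn : 1 < n) {t : ℝ} (ht : 0 < t) (ht1 : t ≤ 1) (k : Fin (m + n + 1))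
    (hk : k.1 < m + 1) : |∏ j, wt m n t (k.succAbove j)| ≤ t := by
  have h0 : ∀ j, 0 ≤ wt m n t j := fun j => by unfold wt; split_ifs <;> linarith
  have h1 : ∀ j, wt m n t j ≤ 1 := fun j => by unfold wt; split_ifs <;> linarith
  have hprod := Fin.prod_univ_succAbove (wt m n t) k
  rw [show wt m n t k = 1 from if_pos hk, one_mul] at hprod
  rw [← hprod, abs_of_nonneg (Finset.prod_nonneg fun j _ => h0 j),
    ← Finset.mul_prod_erase _ _ (Finset.mem_univ (Fin.last (m + n)))]
  have hl : wt m n t (Fin.last (m + n)) = t := if_neg (by simp; omega)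
  rw [hl]
  exact mul_le_of_le_one_right ht.le (Finset.prod_le_one (fun j _ => h0 j) fun j _ => h1 j)

/-- Up to a multiplicative constant, contracting by `t` decreases the volume at least by the
factor `t`: patch by patch, compare with the projection to `ℝ^{m+n}`, where volume scales by the
determinant. -/
lemma hausdorff_dg_wt_decay (m n : ℕ) (hn : 1 < n) :
    ∃ C : NNReal, ∀ t : ℝ, 0 < t → t ≤ 1 →
      ∀ Ω : Set (EuclideanSpace ℝ (Fin (m + n + 1))), Ω ⊆ sphereProd m n 1 →
        μH[((m + n : ℕ) : ℝ)] (dg (wt m n t) '' Ω) ≤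
          C * (ENNReal.ofReal t * μH[((m + n : ℕ) : ℝ)] Ω) := by
  set d : ℝ := ((m + n : ℕ) : ℝ) with hd
  have hd0 : 0 ≤ d := Nat.cast_nonneg _
  set K : NNReal := (m + 1) * (m + 1) + 1 with hK
  refine ⟨Fintype.card (Fin (m + 1) × Bool) * K ^ d, fun t ht ht1 Ω hΩ => ?_⟩
  have hpatch : ∀ p : Fin (m + 1) × Bool,
      μH[d] (dg (wt m n t) '' (Ω ∩ patch m n p.1 (if p.2 then 1 else -1))) ≤
        (K : ℝ≥0∞) ^ d * (ENNReal.ofReal t * μH[d] Ω) := by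
    rintro ⟨i, b⟩
    set e : ℝ := if b then 1 else -1 with he
    have he1 : |e| = 1 := by rw [he]; cases b <;> simp
    set S := Ω ∩ patch m n i e with hS
    set k : Fin (m + n + 1) := ⟨i.1, Nat.lt_of_lt_of_le i.2 (by omega)⟩ with hk
    have hmem : ∀ x ∈ dg (wt m n t) '' S, x ∈ patch m n i e := by
      rintro _ ⟨x, hx, rfl⟩
      refine ⟨(dg_wt_mem t x).2 hx.2.1, ?_⟩
      rw [dg_apply, wt, if_pos i.2, one_mul]
      exact hx.2.2
    refine (hausdorff_le_image_of_antilipschitzOn (proj k) K _ (fun x hx y hy => ?_) hd0).trans ?_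
    · have := patch_antilipschitz m n i e he1 (hmem x hx) (hmem y hy)
      simpa [hK] using this
    · gcongr
      rw [Set.image_image]
      simp only [proj_dg]
      rw [← Set.image_image (dg fun j => wt m n t (k.succAbove j)), hausdorff_image_dg]
      gcongr
      · exact prod_wt_le hn ht ht1 k i.2
      · have := (lipschitzWith_proj k).hausdorffMeasure_image_le hd0 S
        rw [ENNReal.coe_one, ENNReal.one_rpow, one_mul] at this
        exact this.trans (measure_mono Set.inter_subset_left)
  have hcov : dg (wt m n t) '' Ω ⊆ ⋃ p : Fin (m + 1) × Bool,
      dg (wt m n t) '' (Ω ∩ patch m n p.1 (if p.2 then 1 else -1)) := by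
    rw [← Set.image_iUnion, ← Set.inter_iUnion]
    exact Set.image_mono fun x hx => ⟨hx, sphereProd_subset_patches m n (hΩ hx)⟩
  refine (measure_mono hcov).trans ((measure_iUnion_fintype_le _ _).trans ?_)
  refine (Finset.sum_le_sum fun p _ => hpatch p).trans ?_
  rw [Finset.sum_const, nsmul_eq_mul, ENNReal.coe_mul, ENNReal.coe_natCast,
    ENNReal.coe_rpow_of_nonneg _ hd0, mul_assoc, Finset.card_univ]

/-! ### Attaining a prescribed volume -/

/-- A region of volume `w` in `S^m(1) × ℝ^n` can be contracted to any volume `v ≤ w`. -/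
lemma exists_dg_wt_volume (m n : ℕ) (hn : 1 < n) {v w : ℝ} (hv : 0 < v) (hvw : v ≤ w)
    {Ω : Set (EuclideanSpace ℝ (Fin (m + n + 1)))} (hΩ : Ω ⊆ sphereProd m n 1)
    (hw : μH[((m + n : ℕ) : ℝ)] Ω = ENNReal.ofReal w) :
    ∃ t : ℝ, 0 < t ∧ t ≤ 1 ∧ μH[((m + n : ℕ) : ℝ)] (dg (wt m n t) '' Ω) = ENNReal.ofReal v := by
  obtain ⟨C, hC⟩ := hausdorff_dg_wt_decay m n hn
  set d : ℝ := ((m + n : ℕ) : ℝ) with hd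
  have hd0 : 0 ≤ d := Nat.cast_nonneg _
  have hw0 : 0 < w := hv.trans_le hvw
  set f : ℝ → ℝ≥0∞ := fun t => μH[d] (dg (wt m n t) '' Ω) with hf
  have hf1 : f 1 = ENNReal.ofReal w := by simp [hf, dg_wt_one, hw]
  have hle : ∀ {s t : ℝ}, 0 < s → s ≤ t → f s ≤ f t ∧ f t ≤ ENNReal.ofReal ((t / s) ^ d) * f s :=
    fun hs hst => hausdorff_dg_wt_le m n hd0 hs hst Ω
  have hfin : ∀ {t : ℝ}, 0 < t → f t ≠ ⊤ := by
    intro t ht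
    rcases le_total t 1 with h | h
    · exact ne_top_of_le_ne_top (hf1 ▸ ENNReal.ofReal_ne_top) (hle ht h).1
    · exact ne_top_of_le_ne_top (hf1 ▸ ENNReal.mul_ne_top ENNReal.ofReal_ne_top
        ENNReal.ofReal_ne_top) (hle one_pos h).2
  set g : ℝ → ℝ := fun t => (f t).toReal with hg
  have hg0 : ∀ t, 0 ≤ g t := fun t => ENNReal.toReal_nonneg
  have hgle : ∀ {s t : ℝ}, 0 < s → s ≤ t → g s ≤ g t ∧ g t ≤ (t / s) ^ d * g s := by
    intro s t hs hst
    have ht := hs.trans_le hst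
    refine ⟨ENNReal.toReal_mono (hfin ht) (hle hs hst).1, ?_⟩
    have := ENNReal.toReal_mono (ENNReal.mul_ne_top ENNReal.ofReal_ne_top (hfin hs)) (hle hs hst).2
    rwa [ENNReal.toReal_mul, ENNReal.toReal_ofReal (by positivity)] at this
  have hcont : ∀ t : ℝ, 0 < t → ContinuousAt g t := by
    intro t ht
    have hp : Filter.Tendsto (fun s : ℝ => (s / t) ^ d) (nhds t) (nhds 1) := by
      have : ContinuousAt (fun s : ℝ => (s / t) ^ d) t :=
        (continuousAt_id.div_const t).rpow_const (Or.inr hd0)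
      simpa [ContinuousAt, div_self ht.ne'] using this
    have hlo : Filter.Tendsto (fun s : ℝ => min 1 ((s / t) ^ d) * g t) (nhds t) (nhds (g t)) := by
      simpa using ((tendsto_const_nhds (x := (1 : ℝ))).min hp).mul_const (g t)
    have hhi : Filter.Tendsto (fun s : ℝ => max 1 ((s / t) ^ d) * g t) (nhds t) (nhds (g t)) := by
      simpa using ((tendsto_const_nhds (x := (1 : ℝ))).max hp).mul_const (g t)
    refine tendsto_of_tendsto_of_tendsto_of_le_of_le' hlo hhi ?_ ?_
    · filter_upwards [lt_mem_nhds ht] with s hs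
      rcases le_total s t with h | h
      · have h2 := (hgle hs h).2
        have h3 : (s / t) ^ d * (t / s) ^ d = 1 := by
          rw [← Real.mul_rpow (by positivity) (by positivity),
            div_mul_div_cancel₀ ht.ne', div_self hs.ne', Real.one_rpow]
        have h4 : 0 ≤ (s / t) ^ d := by positivity
        calc min 1 ((s / t) ^ d) * g t ≤ (s / t) ^ d * g t :=
              mul_le_mul_of_nonneg_right (min_le_right _ _) (hg0 t)
          _ ≤ (s / t) ^ d * ((t / s) ^ d * g s) := mul_le_mul_of_nonneg_left h2 h4
          _ = g s := by rw [← mul_assoc, h3, one_mul]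
      · exact (mul_le_of_le_one_left (hg0 t) (min_le_left _ _)).trans (hgle ht h).1
    · filter_upwards [lt_mem_nhds ht] with s hs
      rcases le_total s t with h | h
      · exact (hgle hs h).1.trans (le_mul_of_one_le_left (hg0 t) (le_max_left _ _))
      · exact (hgle ht h).2.trans (mul_le_mul_of_nonneg_right (le_max_right _ _) (hg0 t))
  -- With `t₀ = min 1 (v / (C w + 1))` the decay estimate gives `g t₀ ≤ C t₀ w ≤ v`.
  set t₀ : ℝ := min 1 (v / (C * w + 1)) with ht₀
  have hden : (0 : ℝ) < C * w + 1 := by positivity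
  have h0 : 0 < t₀ := lt_min one_pos (by positivity)
  have h01 : t₀ ≤ 1 := min_le_left _ _
  have hg₀ : g t₀ ≤ v := by
    have h := ENNReal.toReal_mono (by rw [hw]; finiteness) (hC t₀ h0 h01 Ω hΩ)
    rw [hw, ENNReal.toReal_mul, ENNReal.toReal_mul, ENNReal.toReal_ofReal h0.le,
      ENNReal.toReal_ofReal hw0.le, ENNReal.coe_toReal] at h
    have h2 : t₀ * (C * w + 1) ≤ v := (le_div_iff₀ hden).1 (min_le_right _ _)
    refine h.trans ?_
    nlinarith
  have hg1 : v ≤ g 1 := by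
    simp only [hg, hf1, ENNReal.toReal_ofReal hw0.le]
    exact hvw
  obtain ⟨t, ht, hgt⟩ := intermediate_value_Icc h01
    (fun t ht => (hcont t (h0.trans_le ht.1)).continuousWithinAt) (Set.mem_Icc.2 ⟨hg₀, hg1⟩)
  have htpos := h0.trans_le ht.1
  exact ⟨t, htpos, ht.2, by rw [← hgt, ENNReal.ofReal_toReal (hfin htpos)]⟩

/-- The isoperimetric profile of `S^m(1) × ℝ^n` is non-decreasing on `(0,∞)`. -/
theorem isoProfile_sphereProd_monotone (m n : ℕ) (hm : 1 < m) (hn : 1 < n) :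
    MonotoneOn (fun v => isoProfile (sphereProd m n 1) (m + n) v) (Set.Ioi (0 : ℝ)) := by
  intro v hv w _ hvw
  refine le_sInf ?_
  rintro A ⟨Ω, hcl, hvol, rfl⟩
  obtain ⟨t, ht, ht1, hvt⟩ := exists_dg_wt_volume m n hn hv hvw hcl.1 hvol
  have hX := wtHomeo_image_sphereProd m n t ht.ne'
  have hinf : isoProfile (sphereProd m n 1) (m + n) v ≤
      μH[((m + n : ℕ) : ℝ) - 1] (boundaryIn (sphereProd m n 1) (dg (wt m n t) '' Ω)) :=
    sInf_le ⟨_, isClosedIn_image (wtHomeo m n t ht.ne') hX hcl, hvt, rfl⟩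
  refine hinf.trans ?_
  have hb := boundaryIn_image (wtHomeo m n t ht.ne') Ω hX
  change boundaryIn _ (dg (wt m n t) '' Ω) = dg (wt m n t) '' _ at hb
  rw [hb]
  have hd : (0 : ℝ) ≤ ((m + n : ℕ) : ℝ) - 1 := by
    rw [sub_nonneg, Nat.one_le_cast]; omega
  have := (lipschitzWith_dg_wt m n t 1 le_rfl
    (by simpa [abs_of_pos ht] using ht1)).hausdorffMeasure_image_le hd
      (boundaryIn (sphereProd m n 1) Ω)
  simpa using this
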